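/- Let u₀ be the bilateral shift on ℓ²(ℤ) and p the projection onto span{e_i : i ≥ 0}. For m, n ∈ ℤ with m ≠ n, there is no invertible operator y with yp = py and no compact k with 1 + k invertible such that u₀^m = (1+k) y u₀^n; i.e., if u₀^m = (1+k) y u₀^n with k compact, 1+k invertible, and y invertible commuting with p, then m = n. -/

import Mathlib

noncomputable section

/-- `H` is `ℓ²(ℤ)`. -/
abbrev HZ : Type := lp (fun _ : ℤ => ℂ) 2

/-- The standard orthonormal basis vectors `e i` of `ℓ²(ℤ)`. -/
noncomputable def e (i : ℤ) : HZ := lp.single 2 i (1 : ℂ)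

/-- A compact perturbation of the identity which is injective is surjective. -/
theorem IsCompactOperator.surjective_one_add_of_injective {𝕜 X : Type*}
    [NontriviallyNormedField 𝕜] [NormedAddCommGroup X] [NormedSpace 𝕜 X] [CompleteSpace X]
    {T : X →L[𝕜] X} (hT : IsCompactOperator T) (hinj : ∀ x, x + T x = 0 → x = 0) :
    ∀ w, ∃ x, x + T x = w := by
  have hμ : (-1 : 𝕜) ≠ 0 := neg_ne_zero.2 one_ne_zero
  rcases hT.hasEigenvalue_or_mem_resolventSet hμ with h | h
  · obtain ⟨v, hv⟩ := h.exists_hasEigenvector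
    have h1 : T v = -v := by simpa using hv.apply_eq_smul
    exact absurd (hinj v (by rw [h1, add_neg_cancel])) hv.2
  · rw [spectrum.mem_resolventSet_iff, ContinuousLinearMap.isUnit_iff_bijective] at h
    intro w
    obtain ⟨x, hx⟩ := h.2 (-w)
    refine ⟨x, ?_⟩
    have h2 : -x - T x = -w := by simpa using hx
    rw [← neg_inj, ← h2]
    abel

/-- If `q` is an idempotent whose range is invariant under the injective operator `V`, and `V`
agrees with an injective operator commuting with `q` up to a compact perturbation, then `V` maps
the range of `q` onto itself. -/
theorem exists_preimage_mem_range_of_compact_perturbation {𝕜 X : Type*}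
    [NontriviallyNormedField 𝕜] [NormedAddCommGroup X] [NormedSpace 𝕜 X] [CompleteSpace X]
    {V z k q : X →L[𝕜] X} (hk : IsCompactOperator k) (hV : ∀ x, V x = 0 → x = 0)
    (hz : ∀ x, z x = 0 → x = 0) (hVz : ∀ x, V (z x) = x + k x) (hq : ∀ x, q (q x) = q x)
    (hzq : ∀ x, z (q x) = q (z x)) (hqV : ∀ x, q (V (q x)) = V (q x))
    {w : X} (hw : q w = w) : ∃ x, q x = x ∧ V x = w := by
  have hrange : ∀ x, q x = x → q (V (z x)) = V (z x) := fun x hx ↦ by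
    rw [← hx, hzq, hqV]
  have hT : IsCompactOperator (q ∘L k ∘L q) := (hk.comp_clm q).clm_comp q
  have hsurj := hT.surjective_one_add_of_injective fun x hx ↦ by
    have h0 : x + q (k (q x)) = 0 := hx
    have hqx : q x = x := by
      have h1 : x = -q (k (q x)) := eq_neg_of_add_eq_zero_left h0
      rw [h1, map_neg, hq]
    refine hz x (hV _ ?_)
    rw [← hrange x hqx, hVz, map_add, hqx]
    rwa [hqx] at h0
  obtain ⟨x, hx⟩ := hsurj w
  have h0 : x + q (k (q x)) = w := hx
  have hqx : q x = x := by
    have h1 : x = w - q (k (q x)) := eq_sub_of_add_eq h0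
    rw [h1, map_sub, hq, hw]
  refine ⟨z x, by rw [← hzq, hqx], ?_⟩
  rw [← hrange x hqx, hVz, map_add, hqx]
  rwa [hqx] at h0

theorem HZ.ext_clm {f g : HZ →L[ℂ] HZ} (h : ∀ i, f (e i) = g (e i)) : f = g := by
  refine lp.ext_continuousLinearMap (by norm_num) fun i ↦ ?_
  ext1
  simpa [e] using h i

theorem e_ne_zero (i : ℤ) : e i ≠ 0 := by
  intro h
  have h1 := congrArg (fun f : HZ ↦ f i) h
  simp [e] at h1

theorem zpow_shift_apply (U : unitary (HZ →L[ℂ] HZ))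
    (hu : ∀ i : ℤ, (U : HZ →L[ℂ] HZ) (e i) = e (i + 1)) (N i : ℤ) :
    (↑(U ^ N) : HZ →L[ℂ] HZ) (e i) = e (i + N) := by
  have hinv : ∀ i : ℤ, (↑(U⁻¹) : HZ →L[ℂ] HZ) (e i) = e (i - 1) := fun i ↦ by
    have h1 : (↑(U⁻¹ * U) : HZ →L[ℂ] HZ) (e (i - 1)) = e (i - 1) := by
      rw [inv_mul_cancel]; rfl
    rw [← h1, Submonoid.coe_mul, mul_apply_eq_comp, hu, sub_add_cancel]
  induction N generalizing i with
  | zero => simp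
  | succ n ih =>
    rw [zpow_add_one, Submonoid.coe_mul, mul_apply_eq_comp, hu, ih]
    congr 1; ring
  | pred n ih =>
    rw [zpow_sub_one, Submonoid.coe_mul, mul_apply_eq_comp, hinv, ih]
    congr 1; ring

theorem unitary_apply_injective {W : unitary (HZ →L[ℂ] HZ)} :
    Function.Injective (W : HZ →L[ℂ] HZ) := by
  refine Function.LeftInverse.injective (g := (↑(W⁻¹) : HZ →L[ℂ] HZ)) fun x ↦ ?_
  rw [← mul_apply_eq_comp, ← Submonoid.coe_mul, inv_mul_cancel]; rfl

/-- If an injective operator acting on the basis as translation by `N` agrees, up to a compact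
perturbation, with an injective operator commuting with the coordinate projection onto `s`, and if
`s` is stable under translation by `N`, then it is also stable under translation by `-N`. -/
theorem sub_mem_of_compact_perturbation {V z k q : HZ →L[ℂ] HZ} {N : ℤ} {s : Set ℤ}
    (hk : IsCompactOperator k) (hV : ∀ x, V x = 0 → x = 0) (hVe : ∀ i, V (e i) = e (i + N))
    (hz : ∀ x, z x = 0 → x = 0) (hVz : ∀ x, V (z x) = x + k x)
    (hq_mem : ∀ i ∈ s, q (e i) = e i) (hq_notMem : ∀ i ∉ s, q (e i) = 0)
    (hzq : ∀ x, z (q x) = q (z x)) (hs : ∀ i ∈ s, i + N ∈ s) {j : ℤ} (hj : j ∈ s) :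
    j - N ∈ s := by
  have hqq : q * q = q := HZ.ext_clm fun i ↦ by
    by_cases hi : i ∈ s
    · rw [mul_apply_eq_comp, hq_mem i hi, hq_mem i hi]
    · rw [mul_apply_eq_comp, hq_notMem i hi, map_zero]
  have hqV : q * (V * q) = V * q := HZ.ext_clm fun i ↦ by
    by_cases hi : i ∈ s
    · rw [mul_apply_eq_comp, mul_apply_eq_comp, hq_mem i hi, hVe, hq_mem _ (hs i hi)]
    · rw [mul_apply_eq_comp, mul_apply_eq_comp, hq_notMem i hi, map_zero, map_zero]
  obtain ⟨x, hx, hVx⟩ := exists_preimage_mem_range_of_compact_perturbation hk hV hz hVz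
    (fun x ↦ DFunLike.congr_fun hqq x) hzq (fun x ↦ DFunLike.congr_fun hqV x) (hq_mem j hj)
  have hxe : x = e (j - N) := by
    rw [← sub_eq_zero]
    exact hV _ (by rw [map_sub, hVx, hVe, sub_add_cancel, sub_self])
  by_contra hjN
  rw [hxe, hq_notMem _ hjN] at hx
  exact e_ne_zero _ hx.symm

/-- Let `u₀` be the bilateral shift on `ℓ²(ℤ)` (a unitary with `u₀ (e i) = e (i+1)`)
and `p` the orthogonal projection onto the closed span of `{e i : i ≥ 0}`.  If
`u₀^m = (1 + k) y u₀^n` with `k` compact, `1 + k` invertible, and `y` invertible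
commuting with `p`, then `m = n`. -/
theorem stmt19 (U : unitary (HZ →L[ℂ] HZ))
    (hu : ∀ i : ℤ, (U : HZ →L[ℂ] HZ) (e i) = e (i + 1))
    (p : HZ →L[ℂ] HZ)
    (hp : ∀ i : ℤ, p (e i) = if 0 ≤ i then e i else 0)
    (hidem : IsIdempotentElem p) (hsa : IsSelfAdjoint p)
    (m n : ℤ) (k y : HZ →L[ℂ] HZ)
    (hk : IsCompactOperator ⇑k) (hk1 : IsUnit (1 + k))
    (hy : IsUnit y) (hyp : y * p = p * y)
    (heq : (↑(U ^ m) : HZ →L[ℂ] HZ) = (1 + k) * y * (↑(U ^ n) : HZ →L[ℂ] HZ)) :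
    m = n := by
  have hVy : (↑(U ^ (m - n)) : HZ →L[ℂ] HZ) = (1 + k) * y := by
    rw [zpow_sub, Submonoid.coe_mul, heq, mul_assoc, ← Submonoid.coe_mul, mul_inv_cancel]
    simp
  obtain ⟨N, hN⟩ : ∃ N, N = m - n := ⟨_, rfl⟩
  rw [← hN] at hVy
  obtain ⟨y, rfl⟩ := hy
  have hVz : ∀ x, (↑(U ^ N) : HZ →L[ℂ] HZ) ((↑y⁻¹ : HZ →L[ℂ] HZ) x) = x + k x := fun x ↦ by
    rw [hVy, ← mul_apply_eq_comp, mul_assoc, Units.mul_inv]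
    simp
  have hz : ∀ x, (↑y⁻¹ : HZ →L[ℂ] HZ) x = 0 → x = 0 := fun x hx ↦ by
    have h1 : ((↑y : HZ →L[ℂ] HZ) * ↑y⁻¹) x = x := by rw [Units.mul_inv]; rfl
    rw [← h1, mul_apply_eq_comp, hx, map_zero]
  have hV : ∀ x, (↑(U ^ N) : HZ →L[ℂ] HZ) x = 0 → x = 0 := fun x hx ↦
    unitary_apply_injective (hx.trans (map_zero _).symm)
  have hzp : (↑y⁻¹ : HZ →L[ℂ] HZ) * p = p * ↑y⁻¹ := (Commute.units_inv_left hyp).eq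
  have hzpx : ∀ x, (↑y⁻¹ : HZ →L[ℂ] HZ) (p x) = p ((↑y⁻¹ : HZ →L[ℂ] HZ) x) :=
    fun x ↦ DFunLike.congr_fun hzp x
  have hshift := zpow_shift_apply U hu N
  rcases lt_trichotomy N 0 with hneg | h0 | hpos
  · have hmem := sub_mem_of_compact_perturbation (q := 1 - p) (s := Set.Iio 0) (j := -1)
      hk hV hshift hz hVz
      (fun i hi ↦ by rw [sub_apply, one_apply_eq_self, hp, if_neg (not_le.2 hi), sub_zero])
      (fun i hi ↦ by rw [sub_apply, one_apply_eq_self, hp, if_pos (not_lt.1 hi), sub_self])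
      (fun x ↦ by simp only [sub_apply, one_apply_eq_self, map_sub, hzpx])
      (fun i hi ↦ add_neg hi hneg) (Set.mem_Iio.2 (by norm_num))
    rw [Set.mem_Iio] at hmem
    lia
  · lia
  · have hmem := sub_mem_of_compact_perturbation (s := Set.Ici 0) (j := 0) hk hV hshift hz hVz
      (fun i hi ↦ by rw [hp, if_pos (Set.mem_Ici.1 hi)])
      (fun i hi ↦ by rw [hp, if_neg (mt Set.mem_Ici.2 hi)]) hzpx
      (fun i hi ↦ add_nonneg hi hpos.le) (Set.mem_Ici.2 le_rfl)
    rw [Set.mem_Ici] at hmem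
    lia
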